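/- arXiv:1208.1695 — 3 statements merged into one kernel-verified Lean document; each statement's English description precedes it below -/
import Mathlib

section
/- Let X ⊂ k^n be a finite set of N distinct points and let u_1 < u_2 < … < u_N be the elements of the Gröbner escalier N(I(X)) listed in increasing order with respect to the lexicographical order induced by x_1 < … < x_n. If v_1 < v_2 < … < v_N are any N monomials whose residue classes form a k-vector-space basis of k[x_1,…,x_n]/I(X), then u_j ≤ v_j for every j = 1,…,N; that is, the monomial basis of the quotient given by the Gröbner escalier is minimal with respect to the term order. -/
/-!  STATEMENT 3.
The monomial basis of `k[x_1,…,x_n]/I(X)` given by the Gröbner escalier is minimal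
with respect to the lexicographical term order: if `u_1 < … < u_N` enumerates the
escalier and `v_1 < … < v_N` are monomials whose residue classes form a basis of the
quotient, then `u_j ≤ v_j` for every `j`. -/

open MvPolynomial

/-- Lexicographical order induced by `x_1 < … < x_n` on exponent vectors. -/
def lexLt {n : ℕ} (a b : Fin n →₀ ℕ) : Prop :=
  ∃ j : Fin n, a j < b j ∧ ∀ i : Fin n, j < i → a i = b i

/-- `m` is the lex-leading monomial (exponent vector) of `f`. -/
def IsLeadMon {n : ℕ} {k : Type*} [Field k]
    (f : MvPolynomial (Fin n) k) (m : Fin n →₀ ℕ) : Prop :=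
  m ∈ f.support ∧ ∀ e ∈ f.support, e ≠ m → lexLt e m

/-- `T(I)`: the set of lex-leading monomials of nonzero elements of `I`. -/
def LTset {n : ℕ} {k : Type*} [Field k]
    (I : Ideal (MvPolynomial (Fin n) k)) : Set (Fin n →₀ ℕ) :=
  {m | ∃ f ∈ I, f ≠ 0 ∧ IsLeadMon f m}

/-- The Gröbner escalier `N(I) = T \ T(I)`. -/
def Escalier {n : ℕ} {k : Type*} [Field k]
    (I : Ideal (MvPolynomial (Fin n) k)) : Set (Fin n →₀ ℕ) :=
  (LTset I)ᶜ

/-! Process the monomials in increasing order and keep those whose class in the quotient is not a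
combination of the classes of smaller monomials. A leading monomial of an element of `I` is never
kept, so the kept monomials lie in the escalier, and they generate greedily: every `x^m` is, modulo
`I`, a combination of kept monomials `≤ x^m`. If `v_j < u_j`, then the `j + 1` independent classes
of `v_0, …, v_j` would lie in the span of the `j` classes of `u_0, …, u_{j-1}`. -/

section Greedy

variable {M V : Type*} [AddCommMonoid V]

/-- The indices selected by the greedy algorithm on a family `e` indexed by an ordered type:
those `m` for which `e m` is not a linear combination of earlier members of the family. -/
def greedyIndices [Preorder M] (R : Type*) [Semiring R] [Module R V] (e : M → V) : Set M :=
  {m | e m ∉ Submodule.span R (e '' Set.Iio m)}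

theorem mem_span_image_greedyIndices_inter_Iic {R : Type*} [Semiring R] [Module R V]
    [Preorder M] [WellFoundedLT M] (e : M → V) (m : M) :
    e m ∈ Submodule.span R (e '' (greedyIndices R e ∩ Set.Iic m)) := by
  induction m using WellFoundedLT.induction with
  | ind m ih =>
    by_cases hm : m ∈ greedyIndices R e
    · exact Submodule.subset_span ⟨m, ⟨hm, le_rfl⟩, rfl⟩
    · refine Submodule.span_le.mpr ?_ (not_not.mp hm)
      rintro _ ⟨l, hl : l < m, rfl⟩
      have hsub : greedyIndices R e ∩ Set.Iic l ⊆ greedyIndices R e ∩ Set.Iic m :=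
        Set.inter_subset_inter_right _ (Set.Iic_subset_Iic.mpr hl.le)
      exact Submodule.span_mono (Set.image_mono hsub) (ih l hl)

theorem le_of_greedyIndices_subset_range {R : Type*} [Semiring R] [StrongRankCondition R]
    [Module R V] [LinearOrder M] [WellFoundedLT M]
    {ι : Type*} [LinearOrder ι] [LocallyFiniteOrderBot ι]
    {e : M → V} {u v : ι → M} (hu : Monotone u) (hv : Monotone v)
    (hu_range : greedyIndices R e ⊆ Set.range u) (hv_li : LinearIndependent R (e ∘ v)) (j : ι) :
    u j ≤ v j := by
  classical
  by_contra! hlt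
  have hgreedy (i : Finset.Iic j) :
      greedyIndices R e ∩ Set.Iic (v i) ⊆ u '' Set.Iio j := by
    rintro m ⟨hm, hmi : m ≤ v i⟩
    obtain ⟨l, rfl⟩ := hu_range hm
    have hij : v i ≤ v j := hv (Finset.mem_Iic.mp i.2)
    exact ⟨l, hu.reflect_lt ((hmi.trans hij).trans_lt hlt), rfl⟩
  have hspan : Set.range (fun i : Finset.Iic j => e (v i)) ⊆
      Submodule.span R ((Finset.Iio j).image (e ∘ u) : Set V) := by
    rintro _ ⟨i, rfl⟩
    rw [Finset.coe_image, Finset.coe_Iio, Set.image_comp]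
    exact Submodule.span_mono (Set.image_mono (hgreedy i))
      (mem_span_image_greedyIndices_inter_Iic e (v i))
  have hli : LinearIndependent R (fun i : Finset.Iic j => e (v i)) :=
    hv_li.comp _ Subtype.val_injective
  have hcard : (Finset.Iic j).card ≤ ((Finset.Iio j).image (e ∘ u)).card := by
    simpa only [Fintype.card_coe, Finset.coe_sort_coe] using
      linearIndependent_le_span_aux' _ hli _ hspan
  rw [Finset.Iic_eq_cons_Iio, Finset.card_cons] at hcard
  exact (hcard.trans Finset.card_image_le).not_gt (Nat.lt_succ_self _)

end Greedy

theorem lexLt_iff_toColex_lt {n : ℕ} {a b : Fin n →₀ ℕ} :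
    lexLt a b ↔ toColex a < toColex b :=
  exists_congr fun _ => and_comm

/-- The residue class modulo `I` of the monomial with exponent vector `m`. Exponent vectors are
taken in `Colex`, whose order is decided by the last differing coordinate, as `lexLt` is. -/
noncomputable def monomialClass {σ k : Type*} [CommRing k]
    (I : Ideal (MvPolynomial σ k)) (m : Colex (σ →₀ ℕ)) : MvPolynomial σ k ⧸ I :=
  Ideal.Quotient.mk I (monomial (ofColex m) 1)

theorem mk_eq_sum_smul_monomialClass {σ k : Type*} [CommRing k]
    (I : Ideal (MvPolynomial σ k)) (f : MvPolynomial σ k) :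
    Ideal.Quotient.mk I f = ∑ m ∈ f.support, f.coeff m • monomialClass I (toColex m) := by
  have hsmul (m : σ →₀ ℕ) :
      f.coeff m • monomialClass I (toColex m) = Ideal.Quotient.mk I (monomial m (f.coeff m)) := by
    rw [monomialClass, ofColex_toColex, ← Ideal.Quotient.mkₐ_eq_mk k, ← map_smul, smul_monomial,
      smul_eq_mul, mul_one]
  simp only [hsmul, ← map_sum, support_sum_monomial_coeff]

theorem monomialClass_mem_span_Iio_of_mem_LTset {n : ℕ} {k : Type*} [Field k]
    {I : Ideal (MvPolynomial (Fin n) k)} {m : Fin n →₀ ℕ} (hm : m ∈ LTset I) :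
    monomialClass I (toColex m) ∈
      Submodule.span k (monomialClass I '' Set.Iio (toColex m)) := by
  obtain ⟨f, hfI, -, hmf, hlead⟩ := hm
  have hsum := mk_eq_sum_smul_monomialClass I f
  rw [Ideal.Quotient.eq_zero_iff_mem.mpr hfI, ← Finset.add_sum_erase _ _ hmf] at hsum
  rw [← Submodule.smul_mem_iff _ (mem_support_iff.mp hmf), eq_neg_of_add_eq_zero_left hsum.symm]
  refine Submodule.neg_mem _ (Submodule.sum_mem _ fun d hd => Submodule.smul_mem _ _ ?_)
  obtain ⟨hdm, hdf⟩ := Finset.mem_erase.mp hd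
  exact Submodule.subset_span ⟨toColex d, lexLt_iff_toColex_lt.mp (hlead d hdf hdm), rfl⟩

theorem greedyIndices_monomialClass_subset_preimage_Escalier {n : ℕ} {k : Type*} [Field k]
    (I : Ideal (MvPolynomial (Fin n) k)) :
    greedyIndices k (monomialClass I) ⊆ ofColex ⁻¹' Escalier I :=
  fun _ hm hlead => hm (monomialClass_mem_span_Iio_of_mem_LTset hlead)

theorem escalier_monomial_basis_minimal_general {n : ℕ} {k : Type*} [Field k]
    (I : Ideal (MvPolynomial (Fin n) k))
    {ι : Type*} [LinearOrder ι] [LocallyFiniteOrderBot ι]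
    (u v : ι → (Fin n →₀ ℕ))
    (hu_range : Escalier I ⊆ Set.range u)
    (hu_mono : ∀ i j : ι, i < j → lexLt (u i) (u j))
    (hv_mono : ∀ i j : ι, i < j → lexLt (v i) (v j))
    (hv_li : LinearIndependent k
      (fun j : ι => Ideal.Quotient.mk I (monomial (v j) (1 : k))))
    (j : ι) :
    u j = v j ∨ lexLt (u j) (v j) := by
  have hu : StrictMono (toColex ∘ u) := fun _ _ hij => lexLt_iff_toColex_lt.mp (hu_mono _ _ hij)
  have hv : StrictMono (toColex ∘ v) := fun _ _ hij => lexLt_iff_toColex_lt.mp (hv_mono _ _ hij)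
  have hrange : greedyIndices k (monomialClass I) ⊆ Set.range (toColex ∘ u) := by
    intro m hm
    obtain ⟨i, hi⟩ := hu_range (greedyIndices_monomialClass_subset_preimage_Escalier I hm)
    exact ⟨i, congrArg toColex hi⟩
  have hle := le_of_greedyIndices_subset_range hu.monotone hv.monotone hrange hv_li j
  exact hle.eq_or_lt.imp (fun h => toColex.injective h) lexLt_iff_toColex_lt.mpr

theorem escalier_monomial_basis_minimal {n : ℕ} {k : Type*} [Field k]
    (X : Finset (Fin n → k))
    (I : Ideal (MvPolynomial (Fin n) k))
    (hI : ∀ f, f ∈ I ↔ ∀ p ∈ X, MvPolynomial.eval p f = 0)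
    (N : ℕ) (hN : N = X.card)
    (u v : Fin N → (Fin n →₀ ℕ))
    (hu_range : Set.range u = Escalier I)
    (hu_mono : ∀ i j : Fin N, i < j → lexLt (u i) (u j))
    (hv_mono : ∀ i j : Fin N, i < j → lexLt (v i) (v j))
    (hv_li : LinearIndependent k
      (fun j : Fin N => Ideal.Quotient.mk I (monomial (v j) (1 : k))))
    (hv_span : Submodule.span k (Set.range
      (fun j : Fin N => Ideal.Quotient.mk I (monomial (v j) (1 : k)))) = ⊤) :
    ∀ j : Fin N, u j = v j ∨ lexLt (u j) (v j) := by
  exact escalier_monomial_basis_minimal_general I u v hu_range.ge hu_mono hv_mono hv_li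
end

section
/- (Axis of Evil Theorem for points.) Let X ⊂ k^n be a finite set of distinct points and I = I(X) its vanishing ideal, and fix the lexicographical order induced by x_1 < … < x_n. Then for every monomial τ = x_1^{d_1}⋯x_n^{d_n} in the minimal generating set G(T(I)) of the semigroup ideal T(I) of leading monomials, there exist polynomials g_{m,δ} ∈ k[x_1,…,x_{m−1}] (for 1 ≤ m ≤ n and 1 ≤ δ ≤ d_m) such that the product f_τ := Π_{m=1}^{n} Π_{δ=1}^{d_m} ( x_m − g_{m,δ} ) belongs to I and has leading monomial T(f_τ) = τ; moreover the set {f_τ : τ ∈ G(T(I))} is a minimal Gröbner basis of I with respect to the lexicographical order. -/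
/-!  STATEMENT 7.  (Axis of Evil Theorem for points.)
Let `X ⊂ k^n` be a finite set of distinct points, `I = I(X)` and fix the lex order
induced by `x_1 < … < x_n`.  For every `τ = x_1^{d_1}⋯x_n^{d_n}` in the minimal
generating set `G(T(I))` there are polynomials `g_{m,δ} ∈ k[x_1,…,x_{m−1}]`
(`1 ≤ m ≤ n`, `1 ≤ δ ≤ d_m`) such that `f_τ := Π_m Π_δ (x_m − g_{m,δ}) ∈ I` with
leading monomial `τ`; moreover `{f_τ : τ ∈ G(T(I))}` is a minimal Gröbner basis. -/

open MvPolynomial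

/-- Minimal monomial generating set of a semigroup ideal of monomials:
its divisibility-minimal elements. -/
def minBasis {n : ℕ} (S : Set (Fin n →₀ ℕ)) : Set (Fin n →₀ ℕ) :=
  {m ∈ S | ∀ m' ∈ S, (∃ u, m = m' + u) → m' = m}

/-!
Fix `τ = T(f)` for some `f` in `I(X)`. For a set `s` of variables let `c_s` be the coefficient in
`f` of the part of `τ` outside `s`, seen as a polynomial in the variables of `s`, and write
`c_{≤ m}` and `c_{< m}` when `s` consists of the `x_i` with `i ≤ m`, respectively `i < m`. At a
point `p` of `X` the value of `c_s` is `f p = 0` when `s` contains all the variables, and the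
leading coefficient of `f` when `s` is empty. Hence there is an `m` such that `c_{≤ m}` vanishes at
`p` and `c_{< m}` does not. Substituting `p` for the variables below `x_m` turns `c_{≤ m}` into a
univariate polynomial with root `p m`. Its degree is at most `τ m`, because `τ` is the leading
monomial of `f`, and its coefficient of `x_m ^ τ m` is the value of `c_{< m}` at `p`, so it has at
most `τ m` roots. Interpolating the `δ`-th root on `X` by a polynomial in the variables below `x_m`
gives `g_{m, δ}`.
-/

section Order

open scoped MonomialOrder

/-- The order on exponents in which the largest variable where two of them differ decides. This is
the lexicographic order of the paper; in Mathlib's terminology it is colexicographic, as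
`MonomialOrder.lex` compares the smallest variables first. -/
noncomputable def colexOrder (σ : Type*) [LinearOrder σ] [WellFoundedLT σ] : MonomialOrder σ where
  syn := Colex (σ →₀ ℕ)
  toSyn := { toEquiv := toColex, map_add' := toColex_add }
  toSyn_monotone := Finsupp.toColex_monotone

theorem colexOrder_lt_iff {σ : Type*} [LinearOrder σ] [WellFoundedLT σ] {a b : σ →₀ ℕ} :
    a ≺[colexOrder σ] b ↔ ∃ j, (∀ i, j < i → a i = b i) ∧ a j < b j :=
  Finsupp.Colex.lt_iff

variable {n : ℕ}

theorem lexLt_iff {a b : Fin n →₀ ℕ} : lexLt a b ↔ a ≺[colexOrder (Fin n)] b := by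
  simp only [lexLt, colexOrder_lt_iff, and_comm]

theorem isLeadMon_iff {k : Type*} [Field k] {f : MvPolynomial (Fin n) k} {a : Fin n →₀ ℕ} :
    IsLeadMon f a ↔ f ≠ 0 ∧ (colexOrder (Fin n)).degree f = a := by
  constructor
  · rintro ⟨ha, hlt⟩
    have hf : f ≠ 0 := support_nonempty.1 ⟨a, ha⟩
    refine ⟨hf, by_contra fun hne ↦ ?_⟩
    have hlead := hlt _ ((colexOrder (Fin n)).degree_mem_support hf) hne
    exact (lexLt_iff.1 hlead).not_ge ((colexOrder (Fin n)).le_degree ha)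
  · rintro ⟨hf, rfl⟩
    refine ⟨(colexOrder (Fin n)).degree_mem_support hf, fun e he hne ↦ lexLt_iff.2 ?_⟩
    exact ((colexOrder (Fin n)).le_degree he).lt_of_ne
      ((colexOrder (Fin n)).toSyn.injective.ne hne)

end Order

section MonomialIdeals

variable {n : ℕ}

theorem mem_minBasis_iff {S : Set (Fin n →₀ ℕ)} {a : Fin n →₀ ℕ} :
    a ∈ minBasis S ↔ Minimal (· ∈ S) a := by
  simp only [minBasis, Set.mem_ofPred_eq, ← le_iff_exists_add, minimal_iff, eq_comm]

theorem exists_mem_minBasis_add_eq {S : Set (Fin n →₀ ℕ)} {a : Fin n →₀ ℕ} (ha : a ∈ S) :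
    ∃ τ ∈ minBasis S, ∃ u, a = τ + u := by
  obtain ⟨τ, hτa, hτ⟩ := exists_minimal_le_of_wellFoundedLT (· ∈ S) a ha
  exact ⟨τ, mem_minBasis_iff.2 hτ, le_iff_exists_add.1 hτa⟩

theorem add_mem_LTset {k : Type*} [Field k] {I : Ideal (MvPolynomial (Fin n) k)}
    {a : Fin n →₀ ℕ} (ha : a ∈ LTset I) (u : Fin n →₀ ℕ) : a + u ∈ LTset I := by
  classical
  obtain ⟨f, hfI, hf, hlead⟩ := ha
  have hu : monomial u (1 : k) ≠ 0 := by simp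
  refine ⟨f * monomial u 1, I.mul_mem_right _ hfI, mul_ne_zero hf hu,
    isLeadMon_iff.2 ⟨mul_ne_zero hf hu, ?_⟩⟩
  rw [MonomialOrder.degree_mul hf hu, (isLeadMon_iff.1 hlead).2, MonomialOrder.degree_monomial,
    if_neg one_ne_zero]

theorem mem_LTset_iff_exists_minBasis {k : Type*} [Field k]
    {I : Ideal (MvPolynomial (Fin n) k)} {a : Fin n →₀ ℕ} :
    a ∈ LTset I ↔ ∃ τ ∈ minBasis (LTset I), ∃ u, a = τ + u := by
  refine ⟨exists_mem_minBasis_add_eq, ?_⟩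
  rintro ⟨τ, hτ, u, rfl⟩
  exact add_mem_LTset hτ.1 u

end MonomialIdeals

section TriangularProduct

theorem eq_zero_of_mem_supported {σ R : Type*} [CommSemiring R] {s : Set σ}
    {g : MvPolynomial σ R} (hg : g ∈ supported R s) {e : σ →₀ ℕ} (he : e ∈ g.support) {i : σ}
    (hi : i ∉ s) : e i = 0 := by
  by_contra hei
  exact hi (mem_supported.1 hg
    ((mem_vars_iff_mem_support i).2 ⟨e, he, Finsupp.mem_support_iff.2 hei⟩))

variable {σ R : Type*} [CommRing R]

/-- The product `f_τ = ∏ (x_m - g_{m, δ})` of the theorem, with `δ` running over `0, …, τ m - 1`. -/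
noncomputable def triangularProd [Fintype σ] (τ : σ →₀ ℕ) (g : σ → ℕ → MvPolynomial σ R) :
    MvPolynomial σ R :=
  ∏ m, ∏ δ ∈ Finset.range (τ m), (X m - g m δ)

theorem eval_triangularProd_eq_zero [Fintype σ] {τ : σ →₀ ℕ}
    {g : σ → ℕ → MvPolynomial σ R} {p : σ → R} {m : σ} {δ : ℕ} (hδ : δ < τ m)
    (hp : eval p (g m δ) = p m) : eval p (triangularProd τ g) = 0 := by
  simp only [triangularProd, map_prod]
  refine Finset.prod_eq_zero (Finset.mem_univ m) (Finset.prod_eq_zero (Finset.mem_range.2 hδ) ?_)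
  rw [map_sub, eval_X, hp, sub_self]

variable [LinearOrder σ]

theorem degree_X_sub [Nontrivial R] [WellFoundedLT σ] {m : σ} {g : MvPolynomial σ R}
    (hg : g ∈ supported R (Set.Iio m)) :
    (colexOrder σ).degree (X m - g) = Finsupp.single m 1 := by
  rw [MonomialOrder.degree_sub_of_lt, MonomialOrder.degree_X]
  rw [MonomialOrder.degree_X, MonomialOrder.degree_lt_iff]
  · refine fun e he ↦ colexOrder_lt_iff.2 ⟨m, fun i hi ↦ ?_, ?_⟩
    · rw [eq_zero_of_mem_supported hg he (Set.notMem_Iio.2 hi.le),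
        Finsupp.single_eq_of_ne hi.ne']
    · simp [eq_zero_of_mem_supported hg he Set.self_notMem_Iio]
  · simp [MonomialOrder.toSyn_lt_iff_ne_zero]

theorem X_sub_ne_zero [Nontrivial R] [WellFoundedLT σ] {m : σ} {g : MvPolynomial σ R}
    (hg : g ∈ supported R (Set.Iio m)) : X m - g ≠ 0 :=
  (colexOrder σ).ne_zero_of_degree_ne_zero (by simp [degree_X_sub hg])

theorem triangularProd_ne_zero [Fintype σ] [IsDomain R] (τ : σ →₀ ℕ)
    {g : σ → ℕ → MvPolynomial σ R} (hg : ∀ m δ, g m δ ∈ supported R (Set.Iio m)) :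
    triangularProd τ g ≠ 0 :=
  Finset.prod_ne_zero_iff.2 fun m _ ↦ Finset.prod_ne_zero_iff.2 fun δ _ ↦ X_sub_ne_zero (hg m δ)

theorem degree_triangularProd [Fintype σ] [IsDomain R] (τ : σ →₀ ℕ)
    {g : σ → ℕ → MvPolynomial σ R} (hg : ∀ m δ, g m δ ∈ supported R (Set.Iio m)) :
    (colexOrder σ).degree (triangularProd τ g) = τ := by
  have hne (m δ) : X m - g m δ ≠ 0 := X_sub_ne_zero (hg m δ)
  rw [triangularProd, MonomialOrder.degree_prod fun m _ ↦
    Finset.prod_ne_zero_iff.2 fun δ _ ↦ hne m δ]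
  simp only [MonomialOrder.degree_prod fun δ _ ↦ hne _ δ, degree_X_sub (hg _ _),
    Finset.sum_const, Finset.card_range, Finsupp.smul_single_one]
  exact Finsupp.univ_sum_single τ

end TriangularProduct

section Interpolation

variable {σ K : Type*} [Field K]

theorem isCoprime_ker_eval {p q : σ → K} (hpq : p ≠ q) :
    IsCoprime (RingHom.ker (eval p)) (RingHom.ker (eval q)) := by
  have hmax (r : σ → K) : (RingHom.ker (eval r)).IsMaximal :=
    RingHom.ker_isMaximal_of_surjective _ fun c ↦ ⟨C c, eval_C c⟩
  have := hmax p
  have := hmax q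
  refine Ideal.isCoprime_of_isMaximal fun hker ↦ hpq (funext fun i ↦ ?_)
  have hmem : X i - C (p i) ∈ RingHom.ker (eval q) := hker ▸ by simp [RingHom.mem_ker]
  simpa [RingHom.mem_ker, sub_eq_zero, eq_comm] using hmem

theorem exists_mvPolynomial_eval_eq (s : Finset (σ → K)) (h : (σ → K) → K) :
    ∃ g : MvPolynomial σ K, ∀ p ∈ s, eval p g = h p := by
  obtain ⟨g, hg⟩ := Ideal.exists_forall_sub_mem_ideal
    (I := fun p : s ↦ RingHom.ker (eval p.1))
    (fun _ _ hpq ↦ isCoprime_ker_eval (Subtype.coe_injective.ne hpq)) (fun p ↦ C (h p))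
  exact ⟨g, fun p hp ↦ by simpa [RingHom.mem_ker, sub_eq_zero] using hg ⟨p, hp⟩⟩

theorem exists_mem_supported_eval_eq (t : Set σ) (s : Finset (σ → K)) (h : (t → K) → K) :
    ∃ g ∈ supported K t, ∀ p ∈ s, eval p g = h (t.domRestrict p) := by
  classical
  obtain ⟨g, hg⟩ := exists_mvPolynomial_eval_eq (s.image t.domRestrict) h
  refine ⟨rename (↑) g, supported_eq_range_rename (R := K) t ▸ ⟨g, rfl⟩, fun p hp ↦ ?_⟩
  rw [eval_rename]
  exact hg _ (Finset.mem_image_of_mem _ hp)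

end Interpolation

section PartialCoefficients

theorem exists_Iic_and_not_Iio {σ : Type*} [LinearOrder σ] [LocallyFiniteOrderBot σ]
    {P : Finset σ → Prop} (h_empty : ¬ P ∅) (s : Finset σ) (hs : IsLowerSet (s : Set σ))
    (hPs : P s) : ∃ m, P (Finset.Iic m) ∧ ¬ P (Finset.Iio m) := by
  induction s using Finset.strongInduction with
  | H s ih =>
    have hne : s.Nonempty := Finset.nonempty_iff_ne_empty.2 fun h ↦ h_empty (h ▸ hPs)
    have hs_eq : s = Finset.Iic (s.max' hne) := by
      ext i
      exact ⟨fun hi ↦ Finset.mem_Iic.2 (s.le_max' i hi),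
        fun hi ↦ hs (Finset.mem_Iic.1 hi) (s.max'_mem hne)⟩
    by_cases hP : P (Finset.Iio (s.max' hne))
    · refine ih _ ?_ (by simpa using isLowerSet_Iio (s.max' hne)) hP
      exact Finset.ssubset_iff.2 ⟨s.max' hne, by simp, by rw [Finset.Iio_insert, ← hs_eq]⟩
    · exact ⟨_, hs_eq ▸ hPs, hP⟩

variable {σ R : Type*} [CommSemiring R]

/-- The value at `p` of the coefficient in `f` of the part of the monomial `τ` outside `s`, where
`f` is seen as a polynomial over the ring of polynomials in the variables of `s`. -/
noncomputable def partialCoeff (f : MvPolynomial σ R) (τ : σ →₀ ℕ) (s : Finset σ) (p : σ → R) : R :=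
  open Classical in
  ∑ e ∈ f.support with ∀ i ∉ s, e i = τ i, coeff e f * ∏ i ∈ s, p i ^ e i

theorem partialCoeff_empty (f : MvPolynomial σ R) (τ : σ →₀ ℕ) (p : σ → R) :
    partialCoeff f τ ∅ p = coeff τ f := by
  classical
  simp [partialCoeff, ← DFunLike.ext_iff, Finset.sum_filter, eq_comm]

theorem partialCoeff_univ [Fintype σ] (f : MvPolynomial σ R) (τ : σ →₀ ℕ) (p : σ → R) :
    partialCoeff f τ Finset.univ p = eval p f := by
  simp [partialCoeff, eval_eq']

variable [LinearOrder σ] [LocallyFiniteOrderBot σ]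

/-- The polynomial in `x_m` obtained by substituting `a` for the variables below `x_m` in the
coefficient in `f` of the part of the monomial `τ` above `x_m`. -/
noncomputable def univariateSlice (f : MvPolynomial σ R) (τ : σ →₀ ℕ) (m : σ) (a : Set.Iio m → R) :
    Polynomial R :=
  open Classical in
  ∑ e ∈ f.support with ∀ i, m < i → e i = τ i,
    Polynomial.monomial (e m) (coeff e f * ∏ i, a i ^ e i)

theorem eval_univariateSlice (f : MvPolynomial σ R) (τ : σ →₀ ℕ) (m : σ) (p : σ → R) :
    (univariateSlice f τ m ((Set.Iio m).domRestrict p)).eval (p m) =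
      partialCoeff f τ (Finset.Iic m) p := by
  simp only [univariateSlice, partialCoeff, Polynomial.eval_finsetSum, Polynomial.eval_monomial,
    Finset.mem_Iic, not_le]
  refine Finset.sum_congr (by ext; simp) fun e _ ↦ ?_
  rw [← Finset.Iio_insert, Finset.prod_insert (by simp), mul_assoc, mul_comm (p m ^ e m)]
  simp [Set.domRestrict, Finset.prod_set_coe (Set.Iio m) (f := fun i ↦ p i ^ e i)]

theorem coeff_univariateSlice (f : MvPolynomial σ R) (τ : σ →₀ ℕ) (m : σ) (p : σ → R) :
    (univariateSlice f τ m ((Set.Iio m).domRestrict p)).coeff (τ m) =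
      partialCoeff f τ (Finset.Iio m) p := by
  classical
  simp only [univariateSlice, partialCoeff, Polynomial.finsetSum_coeff, Polynomial.coeff_monomial,
    Finset.mem_Iio, not_lt]
  rw [← Finset.sum_filter, Finset.filter_filter]
  refine Finset.sum_congr (Finset.filter_congr fun e _ ↦ ?_) fun e _ ↦ ?_
  · simp only [le_iff_lt_or_eq, or_imp, forall_and, forall_eq']
  · simp [Set.domRestrict, Finset.prod_set_coe (Set.Iio m) (f := fun i ↦ p i ^ e i)]

theorem natDegree_univariateSlice_degree_le [WellFoundedLT σ] (f : MvPolynomial σ R) (m : σ)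
    (a : Set.Iio m → R) :
    (univariateSlice f ((colexOrder σ).degree f) m a).natDegree ≤ (colexOrder σ).degree f m := by
  classical
  refine Polynomial.natDegree_sum_le_of_forall_le _ _ fun e he ↦
    (Polynomial.natDegree_monomial_le _).trans ?_
  obtain ⟨he_supp, he_above⟩ := Finset.mem_filter.1 he
  by_contra! hlt
  exact ((colexOrder σ).le_degree he_supp).not_gt
    (colexOrder_lt_iff.2 ⟨m, fun i hi ↦ (he_above i hi).symm, hlt⟩)

end PartialCoefficients

section LinearFactors

variable {σ : Type*} [LinearOrder σ] [LocallyFiniteOrderBot σ]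

theorem exists_mem_roots_univariateSlice [Finite σ] {R : Type*} [CommRing R] [IsDomain R]
    {f : MvPolynomial σ R} {τ : σ →₀ ℕ} (hτ : τ ∈ f.support) {p : σ → R} (hp : eval p f = 0) :
    ∃ m, p m ∈ (univariateSlice f τ m ((Set.Iio m).domRestrict p)).roots := by
  cases nonempty_fintype σ
  obtain ⟨m, h_le, h_lt⟩ := exists_Iic_and_not_Iio (P := fun s ↦ partialCoeff f τ s p = 0)
    (by simpa [partialCoeff_empty] using hτ) Finset.univ (by simpa using isLowerSet_univ)
    (by rw [partialCoeff_univ, hp])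
  refine ⟨m, Polynomial.mem_roots'.2 ⟨fun h_zero ↦ h_lt ?_, ?_⟩⟩
  · rw [← coeff_univariateSlice, h_zero, Polynomial.coeff_zero]
  · rw [Polynomial.IsRoot, eval_univariateSlice, h_le]

theorem exists_triangularProd_eval_eq_zero [Fintype σ] {K : Type*} [Field K]
    {f : MvPolynomial σ K} (hf : f ≠ 0) {Y : Finset (σ → K)} (hY : ∀ p ∈ Y, eval p f = 0) :
    ∃ g : σ → ℕ → MvPolynomial σ K, (∀ m δ, g m δ ∈ supported K (Set.Iio m)) ∧
      ∀ p ∈ Y, eval p (triangularProd ((colexOrder σ).degree f) g) = 0 := by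
  let roots (m : σ) (a : Set.Iio m → K) : List K :=
    (univariateSlice f ((colexOrder σ).degree f) m a).roots.toList
  have h_interp (m : σ) (δ : ℕ) := exists_mem_supported_eval_eq (Set.Iio m) Y
    fun a ↦ (roots m a).getD δ 0
  choose g hg hgY using h_interp
  refine ⟨g, hg, fun p hp ↦ ?_⟩
  obtain ⟨m, hm⟩ :=
    exists_mem_roots_univariateSlice ((colexOrder σ).degree_mem_support hf) (hY p hp)
  obtain ⟨δ, hδ, hroot⟩ := List.mem_iff_getElem.1 (Multiset.mem_toList.2 hm)
  have hδ_lt : δ < (colexOrder σ).degree f m := calc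
    δ < (roots m ((Set.Iio m).domRestrict p)).length := hδ
    _ = (univariateSlice f _ m ((Set.Iio m).domRestrict p)).roots.card := Multiset.length_toList _
    _ ≤ (univariateSlice f _ m ((Set.Iio m).domRestrict p)).natDegree := Polynomial.card_roots' _
    _ ≤ (colexOrder σ).degree f m := natDegree_univariateSlice_degree_le f m _
  refine eval_triangularProd_eq_zero hδ_lt ?_
  rw [hgY m δ p hp, List.getD_eq_getElem _ _ hδ, hroot]

end LinearFactors

theorem exists_triangularProd_mem {n : ℕ} {k : Type*} [Field k] {X : Finset (Fin n → k)}
    {I : Ideal (MvPolynomial (Fin n) k)} (hI : ∀ f, f ∈ I ↔ ∀ p ∈ X, eval p f = 0)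
    {τ : Fin n →₀ ℕ} (hτ : τ ∈ LTset I) :
    ∃ g : Fin n → ℕ → MvPolynomial (Fin n) k, (∀ m δ, g m δ ∈ supported k (Set.Iio m)) ∧
      triangularProd τ g ∈ I ∧ IsLeadMon (triangularProd τ g) τ := by
  obtain ⟨f, hfI, hf, hlead⟩ := hτ
  obtain rfl := (isLeadMon_iff.1 hlead).2
  obtain ⟨g, hg, hgX⟩ := exists_triangularProd_eval_eq_zero hf ((hI f).1 hfI)
  exact ⟨g, hg, (hI _).2 hgX,
    isLeadMon_iff.2 ⟨triangularProd_ne_zero _ hg, degree_triangularProd _ hg⟩⟩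

theorem axis_of_evil {n : ℕ} {k : Type*} [Field k]
    (X : Finset (Fin n → k))
    (I : Ideal (MvPolynomial (Fin n) k))
    (hI : ∀ f, f ∈ I ↔ ∀ p ∈ X, MvPolynomial.eval p f = 0) :
    ∃ F : (Fin n →₀ ℕ) → MvPolynomial (Fin n) k,
      (∀ τ ∈ minBasis (LTset I),
        (∃ g : Fin n → ℕ → MvPolynomial (Fin n) k,
          -- each `g m δ` only involves the variables `x_1, …, x_{m-1}`
          (∀ m : Fin n, ∀ δ : ℕ, δ < τ m →
            ∀ e ∈ (g m δ).support, ∀ i : Fin n, e i ≠ 0 → i < m) ∧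
          -- the linear factorization
          F τ = ∏ m : Fin n, ∏ δ ∈ Finset.range (τ m),
            (MvPolynomial.X m - g m δ)) ∧
        F τ ∈ I ∧ IsLeadMon (F τ) τ) ∧
      -- `{F τ : τ ∈ G(T(I))}` is a Gröbner basis of `I` …
      (∀ m : Fin n →₀ ℕ, m ∈ LTset I ↔
        ∃ τ ∈ minBasis (LTset I), ∃ u : Fin n →₀ ℕ, m = τ + u) ∧
      -- … which is minimal: no leading monomial divides another one
      (∀ τ ∈ minBasis (LTset I), ∀ τ' ∈ minBasis (LTset I), τ ≠ τ' →
        ¬ ∃ u : Fin n →₀ ℕ, τ' = τ + u) := by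
  choose! g hg hgI hlead using fun τ ↦ exists_triangularProd_mem (τ := τ) hI
  refine ⟨fun τ ↦ triangularProd τ (g τ), fun τ hτ ↦ ?_, fun _ ↦ mem_LTset_iff_exists_minBasis, ?_⟩
  · refine ⟨⟨g τ, fun m δ _ e he i hei ↦ ?_, rfl⟩, hgI τ hτ.1, hlead τ hτ.1⟩
    by_contra hi
    exact hei (eq_zero_of_mem_supported (hg τ hτ.1 m δ) he hi)
  · intro τ hτ τ' hτ' hne hdvd
    exact hne (hτ'.2 τ hτ.1 hdvd)
end

section
/- (Elimination Theorem.) Let I be an ideal of k[x_1,…,x_n], fix the lexicographical order induced by x_1 < … < x_n, and for 1 ≤ j ≤ n let I_j = I ∩ k[x_1,…,x_j] be the j-th elimination ideal. If G is a Gröbner basis of I with respect to this order, then G_j := G ∩ k[x_1,…,x_j] is a Gröbner basis of I_j with respect to the lexicographical order induced by x_1 < … < x_j on k[x_1,…,x_j]. -/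
/-!  STATEMENT 11.  (Elimination Theorem.)
If `G` is a Gröbner basis of `I ⊆ k[x_1,…,x_n]` for the lex order induced by
`x_1 < … < x_n`, then for `1 ≤ j ≤ n` the set `G_j = G ∩ k[x_1,…,x_j]` is a Gröbner
basis of the elimination ideal `I_j = I ∩ k[x_1,…,x_j]` for the lex order on
`k[x_1,…,x_j]`. -/

open MvPolynomial

/-- `f ∈ k[x_1,…,x_j]`: `f` only involves the first `j` variables. -/
def inFirstVars {n : ℕ} {k : Type*} [Field k] (j : ℕ)
    (f : MvPolynomial (Fin n) k) : Prop :=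
  ∀ m ∈ f.support, ∀ i : Fin n, m i ≠ 0 → (i : ℕ) < j

/-!
For the lexicographical order, a monomial smaller than a monomial in `x_1, …, x_j` only involves
`x_1, …, x_j` itself. So a polynomial lies in `k[x_1, …, x_j]` as soon as its leading monomial does,
that is `T(I_j) = T(I) ∩ T[j]`, and likewise `T(G_j) = T(G) ∩ T[j]`. As a product of monomials lies
in `T[j]` only if both factors do, intersecting `T(I) = T(G) · T` with `T[j]` gives
`T(I_j) = T(G_j) · T[j]`.
-/

open scoped Pointwise

section

variable {σ R : Type*} [CommSemiring R] {r : (σ →₀ ℕ) → (σ →₀ ℕ) → Prop} {s t : Set σ}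

/-- The exponent vector of the leading monomial of `f`, for a strict order `r` on exponent vectors.
The polynomial `0` has none. -/
def IsLeadingExponent (r : (σ →₀ ℕ) → (σ →₀ ℕ) → Prop) (f : MvPolynomial σ R) (m : σ →₀ ℕ) : Prop :=
  m ∈ f.support ∧ ∀ e ∈ f.support, e ≠ m → r e m

/-- The set `T(I)` of leading monomials, as exponent vectors. Here `I` is only a set, since
elimination ideals and Gröbner bases are not ideals of the full polynomial ring. -/
def leadingExponents (r : (σ →₀ ℕ) → (σ →₀ ℕ) → Prop) (I : Set (MvPolynomial σ R)) :
    Set (σ →₀ ℕ) :=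
  {m | ∃ f ∈ I, IsLeadingExponent r f m}

/-- `G` is a Gröbner basis of `I` inside the polynomial ring in the variables `x_i`, `i ∈ s`:
multiplying the leading monomials of `G` by the monomials of that ring gives `T(I)`. -/
def IsGroebnerBasis (r : (σ →₀ ℕ) → (σ →₀ ℕ) → Prop) (s : Set σ) (G I : Set (MvPolynomial σ R)) :
    Prop :=
  G ⊆ I ∧ leadingExponents r I = leadingExponents r G + (Finsupp.supported ℕ ℕ s : Set (σ →₀ ℕ))

/-- `r` is an elimination order for the variables outside `s`: monomials below a monomial in the
variables of `s` only involve variables of `s`. -/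
def IsEliminationOrder (r : (σ →₀ ℕ) → (σ →₀ ℕ) → Prop) (s : Set σ) : Prop :=
  ∀ ⦃a b⦄, r a b → b ∈ Finsupp.supported ℕ ℕ s → a ∈ Finsupp.supported ℕ ℕ s

theorem mem_finsuppSupported_iff {M S : Type*} [AddCommMonoid M] [Semiring S] [Module S M]
    {u : σ →₀ M} : u ∈ Finsupp.supported M S s ↔ ∀ i, u i ≠ 0 → i ∈ s := by
  simp only [Finsupp.mem_supported, Set.subset_def, Finset.mem_coe, Finsupp.mem_support_iff]

theorem add_mem_finsuppSupported_iff {a b : σ →₀ ℕ} :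
    a + b ∈ Finsupp.supported ℕ ℕ s ↔
      a ∈ Finsupp.supported ℕ ℕ s ∧ b ∈ Finsupp.supported ℕ ℕ s := by
  simp only [Finsupp.mem_supported', Finsupp.add_apply, Nat.add_eq_zero_iff, forall_and]

theorem add_finsuppSupported_inter (A : Set (σ →₀ ℕ)) (hst : s ⊆ t) :
    (A + (Finsupp.supported ℕ ℕ t : Set (σ →₀ ℕ))) ∩ Finsupp.supported ℕ ℕ s =
      A ∩ Finsupp.supported ℕ ℕ s + (Finsupp.supported ℕ ℕ s : Set (σ →₀ ℕ)) := by
  ext m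
  constructor
  · rintro ⟨⟨e, he, u, -, rfl⟩, hm⟩
    obtain ⟨hes, hus⟩ := add_mem_finsuppSupported_iff.1 hm
    exact Set.add_mem_add ⟨he, hes⟩ hus
  · rintro ⟨e, ⟨he, hes⟩, u, hus, rfl⟩
    exact ⟨Set.add_mem_add he (Finsupp.supported_mono hst hus), add_mem hes hus⟩

theorem mem_supported_iff_forall_mem_support {f : MvPolynomial σ R} :
    f ∈ supported R s ↔ ∀ m ∈ f.support, m ∈ Finsupp.supported ℕ ℕ s := by
  simp only [mem_supported, Finsupp.mem_supported, Set.subset_def, Finset.mem_coe,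
    mem_vars_iff_mem_support]
  grind

theorem IsLeadingExponent.ne_zero {f : MvPolynomial σ R} {m : σ →₀ ℕ}
    (hm : IsLeadingExponent r f m) : f ≠ 0 :=
  support_nonempty.1 ⟨m, hm.1⟩

theorem IsEliminationOrder.mem_supported_iff (hr : IsEliminationOrder r s)
    {f : MvPolynomial σ R} {m : σ →₀ ℕ} (hm : IsLeadingExponent r f m) :
    f ∈ supported R s ↔ m ∈ Finsupp.supported ℕ ℕ s := by
  rw [mem_supported_iff_forall_mem_support]
  refine ⟨fun hf ↦ hf m hm.1, fun hms e he ↦ ?_⟩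
  obtain rfl | hem := eq_or_ne e m
  · exact hms
  · exact hr (hm.2 e he hem) hms

theorem IsEliminationOrder.leadingExponents_inter_supported (hr : IsEliminationOrder r s)
    (I : Set (MvPolynomial σ R)) :
    leadingExponents r (I ∩ supported R s) =
      leadingExponents r I ∩ Finsupp.supported ℕ ℕ s := by
  ext m
  constructor
  · rintro ⟨f, ⟨hfI, hfs⟩, hfm⟩
    exact ⟨⟨f, hfI, hfm⟩, (hr.mem_supported_iff hfm).1 hfs⟩
  · rintro ⟨⟨f, hfI, hfm⟩, hms⟩
    exact ⟨f, ⟨hfI, (hr.mem_supported_iff hfm).2 hms⟩, hfm⟩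

theorem elimination_theorem_general (hr : IsEliminationOrder r s) (hst : s ⊆ t)
    {G I : Set (MvPolynomial σ R)} (hG : IsGroebnerBasis r t G I) :
    IsGroebnerBasis r s (G ∩ supported R s) (I ∩ supported R s) := by
  refine ⟨Set.inter_subset_inter_left _ hG.1, ?_⟩
  rw [hr.leadingExponents_inter_supported, hG.2, add_finsuppSupported_inter _ hst,
    hr.leadingExponents_inter_supported]

theorem isGroebnerBasis_iff {G I : Set (MvPolynomial σ R)} :
    IsGroebnerBasis r s G I ↔ G ⊆ I ∧ ∀ m,
      (∃ f ∈ I, f ≠ 0 ∧ IsLeadingExponent r f m) ↔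
      (∃ g ∈ G, g ≠ 0 ∧ ∃ e, IsLeadingExponent r g e ∧
        ∃ u : σ →₀ ℕ, (∀ i, u i ≠ 0 → i ∈ s) ∧ m = e + u) := by
  refine and_congr_right' (Set.ext_iff.trans (forall_congr' fun m ↦ iff_congr ⟨?_, ?_⟩ ⟨?_, ?_⟩))
  · rintro ⟨f, hf, hm⟩
    exact ⟨f, hf, hm.ne_zero, hm⟩
  · rintro ⟨f, hf, -, hm⟩
    exact ⟨f, hf, hm⟩
  · rintro ⟨e, ⟨g, hg, he⟩, u, hu, rfl⟩
    exact ⟨g, hg, he.ne_zero, e, he, u, mem_finsuppSupported_iff.1 hu, rfl⟩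
  · rintro ⟨g, hg, -, e, he, u, hu, rfl⟩
    exact Set.add_mem_add ⟨g, hg, he⟩ (mem_finsuppSupported_iff.2 hu)

end

theorem isEliminationOrder_lexLt {n : ℕ} {s : Set (Fin n)} (hs : IsLowerSet s) :
    IsEliminationOrder lexLt s := by
  rintro a b ⟨l, hl, hab⟩ hb
  rw [mem_finsuppSupported_iff] at hb ⊢
  intro i hi
  obtain hil | hli := le_or_gt i l
  · exact hs hil (hb l (Nat.ne_zero_of_lt hl))
  · exact hb i (hab i hli ▸ hi)

theorem isLeadMon_iff_isLeadingExponent {n : ℕ} {k : Type*} [Field k]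
    {f : MvPolynomial (Fin n) k} {m : Fin n →₀ ℕ} :
    IsLeadMon f m ↔ IsLeadingExponent lexLt f m :=
  Iff.rfl

theorem inFirstVars_iff_mem_supported {n : ℕ} {k : Type*} [Field k] {j : ℕ}
    {f : MvPolynomial (Fin n) k} :
    inFirstVars j f ↔ f ∈ supported k {i : Fin n | (i : ℕ) < j} := by
  simp only [inFirstVars, mem_supported_iff_forall_mem_support, mem_finsuppSupported_iff,
    Set.mem_ofPred_eq]

theorem IsGroebnerBasis.sep_inFirstVars {n : ℕ} {k : Type*} [Field k]
    {G I : Set (MvPolynomial (Fin n) k)} (hG : IsGroebnerBasis lexLt Set.univ G I) (j : ℕ) :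
    IsGroebnerBasis lexLt {i : Fin n | (i : ℕ) < j}
      {g ∈ G | inFirstVars j g} {f ∈ I | inFirstVars j f} := by
  have hlex : IsEliminationOrder lexLt {i : Fin n | (i : ℕ) < j} :=
    isEliminationOrder_lexLt fun _ _ hle hlt ↦ lt_of_le_of_lt (Fin.le_def.1 hle) hlt
  simp only [inFirstVars_iff_mem_supported]
  exact elimination_theorem_general hlex (Set.subset_univ _) hG

theorem elimination_theorem {n : ℕ} {k : Type*} [Field k]
    (I : Ideal (MvPolynomial (Fin n) k))
    (G : Set (MvPolynomial (Fin n) k))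
    (hGI : G ⊆ (I : Set (MvPolynomial (Fin n) k)))
    -- `G` is a Gröbner basis of `I`: the leading monomials of `G` generate `T(I)`
    (hGB : ∀ m : Fin n →₀ ℕ,
      (∃ f ∈ I, f ≠ 0 ∧ IsLeadMon f m) ↔
      (∃ g ∈ G, g ≠ 0 ∧ ∃ e : Fin n →₀ ℕ, IsLeadMon g e ∧
        ∃ u : Fin n →₀ ℕ, m = e + u))
    (j : ℕ) (hj1 : 1 ≤ j) (hjn : j ≤ n) :
    -- `G_j ⊆ I_j` …
    ({g ∈ G | inFirstVars j g} ⊆ {f | f ∈ I ∧ inFirstVars j f}) ∧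
    -- … and the leading monomials of `G_j` generate `T(I_j)` within `T[j]`
    (∀ m : Fin n →₀ ℕ,
      (∃ f, (f ∈ I ∧ inFirstVars j f) ∧ f ≠ 0 ∧ IsLeadMon f m) ↔
      (∃ g ∈ G, inFirstVars j g ∧ g ≠ 0 ∧ ∃ e : Fin n →₀ ℕ, IsLeadMon g e ∧
        ∃ u : Fin n →₀ ℕ, (∀ i : Fin n, u i ≠ 0 → (i : ℕ) < j) ∧ m = e + u)) := by
  have hG : IsGroebnerBasis lexLt Set.univ G I :=
    isGroebnerBasis_iff.2 ⟨hGI, by simpa [isLeadMon_iff_isLeadingExponent] using hGB⟩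
  simpa only [isLeadMon_iff_isLeadingExponent, Set.mem_ofPred_eq, SetLike.mem_coe, and_assoc] using
    isGroebnerBasis_iff.1 (hG.sep_inFirstVars j)
end
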